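/- Let α ∈ 𝕀 be an irrational power series such that the degrees of the partial quotients A_k(α) in its continued fraction expansion tend to infinity as k → ∞. Then for every ε with 0 < ε ≤ q^{−2}, the set Bad^ε(α) has Hausdorff dimension 1. -/

import Mathlib

/-!
Common setup: the field `𝔽_q((z⁻¹))` of formal power series over a finite field `K` of
cardinality `q`, modeled as the field `FF K` of formal Laurent series in `t = z⁻¹`,
together with its non-Archimedean norm, the embedding of the polynomial ring `𝔽_q[z]`,
distances to polynomial (vectors), Diophantine exponents, `Bad` sets, continued fractions
and best approximation sequences.
-/

open scoped Classical ENNReal NNReal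
open Filter

noncomputable section

namespace FPSDA

variable (K : Type*) [Field K] [Fintype K]

/-- The field `𝔽_q((z⁻¹))` of formal power series in `z⁻¹` over the finite field `K = 𝔽_q`,
modeled as the field of formal Laurent series in the variable `t = z⁻¹`. -/
def FF : Type _ := LaurentSeries K

instance : Field (FF K) := inferInstanceAs (Field (LaurentSeries K))

variable {K}

/-- The identity map, viewing an element of `𝔽_q((z⁻¹))` as a Laurent series in `t = z⁻¹`. -/
def toL (x : FF K) : LaurentSeries K := x

@[simp] lemma toL_zero : toL (0 : FF K) = 0 := rfl
@[simp] lemma toL_add (x y : FF K) : toL (x + y) = toL x + toL y := rfl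
@[simp] lemma toL_neg (x : FF K) : toL (-x) = -toL x := rfl
@[simp] lemma toL_sub (x y : FF K) : toL (x - y) = toL x - toL y := rfl
lemma toL_eq_zero {x : FF K} : toL x = 0 ↔ x = 0 := Iff.rfl

/-- The norm `‖x‖ = q ^ (deg x)` on `𝔽_q((z⁻¹))`, where
`deg x = - (order of x as a Laurent series in z⁻¹)`; `‖0‖ = 0`. -/
def fnorm (x : FF K) : ℝ :=
  if toL x = 0 then 0 else (Fintype.card K : ℝ) ^ (-(toL x).order)

lemma one_le_q : (1 : ℝ) ≤ (Fintype.card K : ℝ) := by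
  exact_mod_cast Fintype.card_pos

lemma fnorm_nonneg (x : FF K) : 0 ≤ fnorm x := by
  unfold fnorm
  split_ifs
  · exact le_refl 0
  · exact zpow_nonneg (by positivity) _

lemma fnorm_eq_zero {x : FF K} : fnorm x = 0 ↔ x = 0 := by
  unfold fnorm
  split_ifs with h
  · exact ⟨fun _ => toL_eq_zero.mp h, fun _ => rfl⟩
  · constructor
    · intro hc
      exact absurd hc (zpow_ne_zero _ (by
        have h0 : (0:ℝ) < (Fintype.card K : ℝ) := by positivity
        exact ne_of_gt h0))
    · intro hc
      exact absurd (toL_eq_zero.mpr hc) h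

lemma fnorm_neg (x : FF K) : fnorm (-x) = fnorm x := by
  unfold fnorm
  rw [toL_neg]
  simp [neg_eq_zero, HahnSeries.order_neg]

lemma fnorm_add_le (x y : FF K) : fnorm (x + y) ≤ max (fnorm x) (fnorm y) := by
  by_cases hxy : x + y = 0
  · rw [fnorm_eq_zero.mpr hxy]
    exact le_max_of_le_left (fnorm_nonneg x)
  by_cases hx : x = 0
  · rw [hx, zero_add]
    exact le_max_right _ _
  by_cases hy : y = 0
  · rw [hy, add_zero]
    exact le_max_left _ _
  have horder : min (toL x).order (toL y).order ≤ (toL (x + y)).order := by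
    rw [toL_add]
    exact HahnSeries.min_order_le_order_add (show toL x + toL y ≠ 0 from hxy)
  have h1 : fnorm (x + y) = (Fintype.card K : ℝ) ^ (-(toL (x+y)).order) := by
    unfold fnorm
    rw [if_neg (show toL (x + y) ≠ 0 from hxy)]
  rcases le_total (toL x).order (toL y).order with h | h
  · have h2 : (toL x).order ≤ (toL (x+y)).order := le_trans (by simp [min_eq_left h]) horder
    refine le_max_of_le_left ?_
    rw [h1]
    unfold fnorm
    rw [if_neg (show toL x ≠ 0 from hx)]
    exact zpow_le_zpow_right₀ one_le_q (by omega)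
  · have h2 : (toL y).order ≤ (toL (x+y)).order := le_trans (by simp [min_eq_right h]) horder
    refine le_max_of_le_right ?_
    rw [h1]
    unfold fnorm
    rw [if_neg (show toL y ≠ 0 from hy)]
    exact zpow_le_zpow_right₀ one_le_q (by omega)

/-- The (ultra)metric `dist x y = ‖x - y‖` on `𝔽_q((z⁻¹))`. -/
instance : MetricSpace (FF K) where
  dist x y := fnorm (x - y)
  dist_self x := by
    show fnorm (x - x) = 0
    rw [sub_self]
    exact fnorm_eq_zero.mpr rfl
  dist_comm x y := by
    show fnorm (x - y) = fnorm (y - x)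
    have h : x - y = -(y - x) := by ring
    rw [h, fnorm_neg]
  dist_triangle x y z := by
    show fnorm (x - z) ≤ fnorm (x - y) + fnorm (y - z)
    have h : x - z = (x - y) + (y - z) := by ring
    calc fnorm (x - z) ≤ max (fnorm (x - y)) (fnorm (y - z)) := by
          rw [h]; exact fnorm_add_le _ _
      _ ≤ fnorm (x - y) + fnorm (y - z) :=
        max_le (le_add_of_nonneg_right (fnorm_nonneg _)) (le_add_of_nonneg_left (fnorm_nonneg _))
  eq_of_dist_eq_zero := by
    intro x y h
    have h' : x - y = 0 := fnorm_eq_zero.mp h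
    exact sub_eq_zero.mp h'

instance : MeasurableSpace (FF K) := borel _
instance : BorelSpace (FF K) := ⟨rfl⟩

/-- The canonical embedding of the polynomial ring `𝔽_q[z]` into `𝔽_q((z⁻¹))`:
the variable `z` is sent to `t⁻¹ = single (-1) 1`. -/
def polyF (P : Polynomial K) : FF K :=
  Polynomial.aeval (HahnSeries.single (-1 : ℤ) (1 : K)) P

/-- Supremum norm of a vector with entries in `𝔽_q((z⁻¹))`. -/
def vnorm {ι : Type*} [Fintype ι] (v : ι → FF K) : ℝ := ⨆ i, fnorm (v i)

/-- `⟨v⟩`, the distance from the vector `v` to the nearest polynomial vector. -/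
def vdist {ι : Type*} [Fintype ι] (v : ι → FF K) : ℝ :=
  ⨅ y : ι → Polynomial K, vnorm (fun i => v i - polyF (y i))

/-- `⟨x⟩`, the distance from the scalar `x` to the nearest polynomial. -/
def sdist (x : FF K) : ℝ := ⨅ y : Polynomial K, fnorm (x - polyF y)

/-- The fractional part `{x} = Σ_{i ≥ 1} a_i z^{-i}` of `x = Σ_i a_i z^{-i}`. -/
def fracPart (x : FF K) : FF K :=
  (⟨fun i => if 1 ≤ i then (toL x).coeff i else 0, (toL x).isPWO_support'.mono (by
      intro i hi
      by_cases h : (1:ℤ) ≤ i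
      · simpa [Function.mem_support, h] using hi
      · simp [Function.mem_support, h] at hi)⟩ : LaurentSeries K)

/-- The integer part `[x] = Σ_{i ≤ 0} a_i z^{-i}` of `x = Σ_i a_i z^{-i}`, as a polynomial
in `z`. -/
def intPoly (x : FF K) : Polynomial K :=
  ∑ i ∈ Finset.range ((-(toL x).order).toNat + 1),
    Polynomial.monomial i ((toL x).coeff (-(i : ℤ)))

/-- `x ∈ 𝔽_q((z⁻¹))` is irrational if it is not in `𝔽_q(z)`, i.e. is not a ratio of two
polynomials in `z`. -/
def FIrrational (x : FF K) : Prop :=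
  ∀ P Q : Polynomial K, Q ≠ 0 → x * polyF Q ≠ polyF P

section Exponents

variable {m n : ℕ}

/-- The norm `‖x‖ = max_j ‖x_j‖` of a polynomial vector `x`. -/
def pnorm {ι : Type*} [Fintype ι] (x : ι → Polynomial K) : ℝ :=
  vnorm (fun i => (polyF (x i) : FF K))

/-- The system `⟨A x - θ⟩ ≤ H^{-ω}`, `‖x‖ ≤ H` has a polynomial solution `x`. -/
def Solv (A : Matrix (Fin n) (Fin m) (FF K)) (θ : Fin n → FF K) (ω H : ℝ) : Prop :=
  ∃ x : Fin m → Polynomial K,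
    vdist (A.mulVec (fun j => polyF (x j)) - θ) ≤ H ^ (-ω) ∧ pnorm x ≤ H

/-- The system `⟨A x⟩ ≤ H^{-ω}`, `‖x‖ ≤ H` has a nonzero polynomial solution `x`. -/
def SolvHom (A : Matrix (Fin n) (Fin m) (FF K)) (ω H : ℝ) : Prop :=
  ∃ x : Fin m → Polynomial K, x ≠ 0 ∧
    vdist (A.mulVec (fun j => polyF (x j))) ≤ H ^ (-ω) ∧ pnorm x ≤ H

/-- The inhomogeneous exponent `ω(A, θ)`: the supremum (in `[0,∞]`) of all `ω` such that
for arbitrarily large `H` the system `⟨A x - θ⟩ ≤ H^{-ω}`, `‖x‖ ≤ H` has a polynomial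
solution. -/
def omegaInhom (A : Matrix (Fin n) (Fin m) (FF K)) (θ : Fin n → FF K) : ℝ≥0∞ :=
  ⨆ (ω : ℝ) (_ : ∀ H₀ : ℝ, ∃ H : ℝ, H₀ ≤ H ∧ Solv A θ ω H), ENNReal.ofReal ω

/-- The uniform inhomogeneous exponent `ω̂(A, θ)`: as `ω(A, θ)`, but with a solution for
all sufficiently large `H`. -/
def omegaHatInhom (A : Matrix (Fin n) (Fin m) (FF K)) (θ : Fin n → FF K) : ℝ≥0∞ :=
  ⨆ (ω : ℝ) (_ : ∃ H₀ : ℝ, ∀ H : ℝ, H₀ ≤ H → Solv A θ ω H), ENNReal.ofReal ω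

/-- The homogeneous exponent `ω(A)`. -/
def omegaHom (A : Matrix (Fin n) (Fin m) (FF K)) : ℝ≥0∞ :=
  ⨆ (ω : ℝ) (_ : ∀ H₀ : ℝ, ∃ H : ℝ, H₀ ≤ H ∧ SolvHom A ω H), ENNReal.ofReal ω

/-- The uniform homogeneous exponent `ω̂(A)`. -/
def omegaHatHom (A : Matrix (Fin n) (Fin m) (FF K)) : ℝ≥0∞ :=
  ⨆ (ω : ℝ) (_ : ∃ H₀ : ℝ, ∀ H : ℝ, H₀ ≤ H → SolvHom A ω H), ENNReal.ofReal ω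

/-- `A` is non-degenerate: the `𝔽_q[z]`-module `Aᵀ 𝔽_q[z]ⁿ + 𝔽_q[z]^m ⊆ 𝔽_q((z⁻¹))^m` has
rank `m + n` over `𝔽_q[z]`, i.e. its `m + n` natural generators are linearly independent
over `𝔽_q[z]`; equivalently, no nonzero polynomial vector `u` makes `Aᵀ u` a polynomial
vector. -/
def Nondegenerate (A : Matrix (Fin n) (Fin m) (FF K)) : Prop :=
  ∀ u : Fin n → Polynomial K,
    (∃ v : Fin m → Polynomial K,
      A.transpose.mulVec (fun i => polyF (u i)) = fun j => polyF (v j)) → u = 0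

/-- `liminf_{x ∈ 𝔽_q[z]^m, ‖x‖ → ∞} ‖x‖^{m/n} ⟨A x - θ⟩`, computed in `[0, ∞]`. -/
def badLiminf (A : Matrix (Fin n) (Fin m) (FF K)) (θ : Fin n → FF K) : ℝ≥0∞ :=
  Filter.liminf
    (fun x : Fin m → Polynomial K =>
      ENNReal.ofReal ((pnorm x) ^ ((m : ℝ) / (n : ℝ)) *
        vdist (A.mulVec (fun j => polyF (x j)) - θ)))
    (Filter.comap (fun x : Fin m → Polynomial K => pnorm x) Filter.atTop)

/-- The set `Bad^ε(A)` of `θ` in the unit polydisc `𝕀ⁿ` with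
`liminf_{‖x‖ → ∞} ‖x‖^{m/n} ⟨A x - θ⟩ ≥ ε`. -/
def Bad (A : Matrix (Fin n) (Fin m) (FF K)) (ε : ℝ) : Set (Fin n → FF K) :=
  {θ | (∀ i, fnorm (θ i) < 1) ∧ ENNReal.ofReal ε ≤ badLiminf A θ}

/-- The set `Bad(A) = ⋃_{ε > 0} Bad^ε(A)`. -/
def BadAll (A : Matrix (Fin n) (Fin m) (FF K)) : Set (Fin n → FF K) :=
  ⋃ (ε : ℝ) (_ : 0 < ε), Bad A ε

/-- `M(y) = ⟨Aᵀ y⟩` for a polynomial vector `y`. -/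
def Mfun (A : Matrix (Fin n) (Fin m) (FF K)) (y : Fin n → Polynomial K) : ℝ :=
  vdist (A.transpose.mulVec (fun i => polyF (y i)))

/-- `y 1, y 2, …` is a sequence of best approximations related to `Aᵀ`:
`1 = Y_1 < Y_2 < ⋯`, `M_1 > M_2 > ⋯`, and `M(x) ≥ M_k` for every nonzero polynomial
vector `x` with `‖x‖ < Y_{k+1}` (the value `y 0` is irrelevant). -/
def IsBestApproxSeq (A : Matrix (Fin n) (Fin m) (FF K))
    (y : ℕ → Fin n → Polynomial K) : Prop :=
  pnorm (y 1) = 1 ∧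
  (∀ k, 1 ≤ k → pnorm (y k) < pnorm (y (k + 1))) ∧
  (∀ k, 1 ≤ k → Mfun A (y (k + 1)) < Mfun A (y k)) ∧
  (∀ k, 1 ≤ k → ∀ x : Fin n → Polynomial K, x ≠ 0 → pnorm x < pnorm (y (k + 1)) →
    Mfun A (y k) ≤ Mfun A x)

end Exponents

section Scalar

/-- The system `⟨ξ x - θ⟩ ≤ H^{-ω}`, `‖x‖ ≤ H` has a polynomial solution `x`. -/
def sSolv (ξ θ : FF K) (ω H : ℝ) : Prop :=
  ∃ x : Polynomial K, sdist (ξ * polyF x - θ) ≤ H ^ (-ω) ∧ fnorm (polyF x) ≤ H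

/-- The scalar inhomogeneous exponent `ω((ξ), θ)`. -/
def somegaInhom (ξ θ : FF K) : ℝ≥0∞ :=
  ⨆ (ω : ℝ) (_ : ∀ H₀ : ℝ, ∃ H : ℝ, H₀ ≤ H ∧ sSolv ξ θ ω H), ENNReal.ofReal ω

/-- The scalar uniform inhomogeneous exponent `ω̂((ξ), θ)`. -/
def somegaHatInhom (ξ θ : FF K) : ℝ≥0∞ :=
  ⨆ (ω : ℝ) (_ : ∃ H₀ : ℝ, ∀ H : ℝ, H₀ ≤ H → sSolv ξ θ ω H), ENNReal.ofReal ω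

/-- The scalar homogeneous exponent `ω((ξ))`. -/
def somegaHom (ξ : FF K) : ℝ≥0∞ :=
  ⨆ (ω : ℝ) (_ : ∀ H₀ : ℝ, ∃ H : ℝ, H₀ ≤ H ∧ ∃ x : Polynomial K, x ≠ 0 ∧
      sdist (ξ * polyF x) ≤ H ^ (-ω) ∧ fnorm (polyF x) ≤ H), ENNReal.ofReal ω

/-- `liminf_{x ∈ 𝔽_q[z], ‖x‖ → ∞} ‖x‖ ⟨α x - θ⟩`, computed in `[0, ∞]`. -/
def sBadLiminf (α θ : FF K) : ℝ≥0∞ :=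
  Filter.liminf
    (fun x : Polynomial K => ENNReal.ofReal (fnorm (polyF x) * sdist (α * polyF x - θ)))
    (Filter.comap (fun x : Polynomial K => fnorm (polyF x)) Filter.atTop)

/-- The set `Bad^ε(α)` of `θ ∈ 𝕀` with `liminf_{‖x‖ → ∞} ‖x‖ ⟨α x - θ⟩ ≥ ε`. -/
def sBad (α : FF K) (ε : ℝ) : Set (FF K) :=
  {θ | fnorm θ < 1 ∧ ENNReal.ofReal ε ≤ sBadLiminf α θ}

end Scalar

section CF

/-- The Gauss map `T x = 1/x - [1/x]` on `𝔽_q((z⁻¹))`. -/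
def gaussMap (x : FF K) : FF K := fracPart x⁻¹

/-- `pquot α k` is the `(k+1)`-st partial quotient `A_{k+1} = [1 / T^k α]` of the
continued fraction expansion of `α`. -/
def pquot (α : FF K) (k : ℕ) : Polynomial K := intPoly ((gaussMap^[k] α)⁻¹)

/-- `cfQ α k` is the denominator `Q_k` of the `k`-th convergent of the continued fraction
expansion of `α`: `Q_0 = 1`, `Q_1 = A_1`, `Q_{k+2} = A_{k+2} Q_{k+1} + Q_k`. -/
def cfQ (α : FF K) : ℕ → Polynomial K
  | 0 => 1
  | 1 => pquot α 0
  | (k + 2) => pquot α (k + 1) * cfQ α (k + 1) + cfQ α k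

/-- `α` is singular on average: for every `c > 0` the proportion of `l ∈ {1, …, N}` for
which `‖{Q α}‖ ≤ c 2^{-l}` has a solution `Q ∈ 𝔽_q[z]` with `0 < ‖Q‖ ≤ 2^l` tends to `1`
as `N → ∞`. -/
def SingularOnAverage (α : FF K) : Prop :=
  ∀ c : ℝ, 0 < c →
    Filter.Tendsto
      (fun N : ℕ =>
        (((Finset.Icc 1 N).filter (fun l : ℕ =>
            ∃ Q : Polynomial K, Q ≠ 0 ∧ fnorm (polyF Q) ≤ 2 ^ l ∧
              fnorm (fracPart (polyF Q * α)) ≤ c / 2 ^ l)).card : ℝ) / (N : ℝ))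
      Filter.atTop (nhds 1)

end CF

end FPSDA

open FPSDA MeasureTheory

/-!
Let `P_k / Q_k` be the convergents of `α`, so that `‖Q_k α - P_k‖ = ‖Q_{k+1}‖⁻¹`. Given a polynomial
`x ≠ 0`, choose `k` with `deg Q_k ≤ deg x + 1 < deg Q_{k+1}`. For every polynomial `y`, the element
`w = α x - θ - y` satisfies `Q_k θ ≡ (Q_k α - P_k) x - Q_k w` modulo polynomials, where
`‖(Q_k α - P_k) x‖ ≤ q⁻²`. So if the coefficient of `z⁻¹` in `Q_k θ` does not vanish, then
`‖Q_k w‖ ≥ q⁻¹`, and therefore `‖x‖ ‖w‖ ≥ q⁻²`.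

That coefficient depends only on the first `deg Q_k + 1` coefficients of `θ`, and the last of these
enters with a nonzero factor. Hence all the conditions on `θ` can be met by adjusting the
coefficients at the positions `deg Q_k + 1`, with the other coefficients prescribed arbitrarily.
Since `deg A_k → ∞` forces `deg Q_k / k → ∞`, the adjusted positions have density zero. Reading the
free coefficients as digits in base `q` then maps the set of admissible `θ` onto `[0, 1]`, and this
map is Hölder of every exponent `r < 1`.
-/

namespace FPSDA

open scoped Polynomial

/-! ### Sequences and averages -/

theorem exists_sum_coeff_mul_ne_zero {R ι : Type*} [Semiring R] {Q : ι → R[X]}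
    (hQ : ∀ k, Q k ≠ 0) (hinj : Function.Injective fun k ↦ (Q k).natDegree) (c : ℕ → R) :
    ∃ u : ℕ → R, (∀ k, ∑ i ∈ Finset.range ((Q k).natDegree + 1), (Q k).coeff i * u i ≠ 0) ∧
      ∀ n ∉ Set.range fun k ↦ (Q k).natDegree, u n = c n := by
  let step (n : ℕ) (v : ∀ m < n, R) : R :=
    if h : ∃ k, (Q k).natDegree = n then
      if ∑ i : Fin n, (Q h.choose).coeff i * v i i.2 = 0 then 1 else 0
    else c n
  obtain ⟨u, hu⟩ : ∃ u : ℕ → R, ∀ n, u n = step n fun m _ ↦ u m :=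
    ⟨Nat.lt_wfRel.wf.fix step, Nat.lt_wfRel.wf.fix_eq step⟩
  refine ⟨u, fun k ↦ ?_, fun n hn ↦ (hu n).trans (dif_neg hn)⟩
  have hk : ∃ j, (Q j).natDegree = (Q k).natDegree := ⟨k, rfl⟩
  have huk : u (Q k).natDegree =
      if ∑ i ∈ Finset.range (Q k).natDegree, (Q k).coeff i * u i = 0 then 1 else 0 := by
    rw [hu, Finset.sum_range]
    simp only [step, dif_pos hk, hinj hk.choose_spec]
  rw [Finset.sum_range_succ, huk]
  split_ifs with h0
  · rw [h0, zero_add, mul_one]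
    exact Polynomial.leadingCoeff_ne_zero.mpr (hQ k)
  · rwa [mul_zero, add_zero]

theorem tendsto_cesaro_atTop {u : ℕ → ℝ} (hu : Tendsto u atTop atTop) :
    Tendsto (fun n : ℕ ↦ (∑ i ∈ Finset.range n, u i) / n) atTop atTop := by
  refine tendsto_atTop.mpr fun b ↦ ?_
  have hmin : Tendsto (fun n ↦ min (u n) (b + 1)) atTop (nhds (b + 1)) := by
    refine tendsto_const_nhds.congr' ?_
    filter_upwards [hu.eventually_ge_atTop (b + 1)] with n hn using (min_eq_right hn).symm
  filter_upwards [hmin.cesaro.eventually_const_lt (lt_add_one b)] with n hn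
  rw [inv_mul_eq_div] at hn
  refine hn.le.trans ?_
  gcongr
  exact min_le_left _ _

lemma exists_count_range_le {d : ℕ → ℕ} (hd : Tendsto (fun k ↦ (d k : ℝ) / k) atTop atTop)
    {s : ℝ} (hs : 0 < s) :
    ∃ C : ℝ, ∀ M : ℕ, (Nat.count (· ∈ Set.range d) M : ℝ) ≤ s * M + C := by
  obtain ⟨k₀, hk₀⟩ := eventually_atTop.mp (hd.eventually_ge_atTop s⁻¹)
  refine ⟨k₀ + 2, fun M ↦ ?_⟩
  have hsub : (Finset.range M).filter (· ∈ Set.range d) ⊆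
      (Finset.range (k₀ + ⌈s * M⌉₊ + 1)).image d := by
    intro n hn
    obtain ⟨hnM, k, rfl⟩ := Finset.mem_filter.mp hn
    refine Finset.mem_image_of_mem d (Finset.mem_range.mpr ?_)
    by_contra! hk
    have hk₁ : k₀ ≤ k := by omega
    have hkpos : (0 : ℝ) < k := by exact_mod_cast (by omega : 0 < k)
    have hdk : s⁻¹ * k ≤ d k := (le_div_iff₀ hkpos).mp (hk₀ k hk₁)
    have hks : (k : ℝ) ≤ s * d k := (inv_mul_le_iff₀ hs).mp hdk
    have hdM : (d k : ℝ) ≤ M := by exact_mod_cast (Finset.mem_range.mp hnM).le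
    have : k ≤ ⌈s * M⌉₊ :=
      Nat.cast_le.mp ((hks.trans (by gcongr)).trans (Nat.le_ceil _))
    omega
  have hcard := (Finset.card_le_card hsub).trans Finset.card_image_le
  rw [Finset.card_range, ← Nat.count_eq_card_filter_range] at hcard
  calc (Nat.count (· ∈ Set.range d) M : ℝ) ≤ k₀ + ⌈s * M⌉₊ + 1 := by exact_mod_cast hcard
    _ ≤ s * M + (k₀ + 2) := by linarith [Nat.ceil_lt_add_one (by positivity : 0 ≤ s * M)]

lemma infinite_of_le_count {p : ℕ → Prop} [DecidablePred p] {r C : ℝ} (hr : 0 < r)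
    (hp : ∀ M : ℕ, r * M ≤ Nat.count p M + C) : {n | p n}.Infinite := by
  intro hfin
  have hcount (M : ℕ) : Nat.count p M ≤ hfin.toFinset.card := by
    rw [Nat.count_eq_card_filter_range]
    exact Finset.card_le_card fun n hn ↦ hfin.mem_toFinset.mpr (Finset.mem_filter.mp hn).2
  obtain ⟨M, hM⟩ := exists_nat_gt ((hfin.toFinset.card + C) / r)
  rw [div_lt_iff₀' hr] at hM
  exact hM.not_ge ((hp M).trans (by gcongr; exact hcount M))

lemma exists_le_count_notMem_range {d : ℕ → ℕ}
    (hd : Tendsto (fun k ↦ (d k : ℝ) / k) atTop atTop) {r : ℝ} (hr : r < 1) :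
    ∃ C : ℝ, ∀ M : ℕ, r * M ≤ Nat.count (· ∉ Set.range d) M + C := by
  obtain ⟨C, hC⟩ := exists_count_range_le hd (sub_pos.mpr hr)
  refine ⟨C, fun M ↦ ?_⟩
  have hsplit := Finset.card_filter_add_card_filter_not (s := Finset.range M) (· ∈ Set.range d)
  rw [Finset.card_range, ← Nat.count_eq_card_filter_range, ← Nat.count_eq_card_filter_range]
    at hsplit
  have hcast : (Nat.count (· ∈ Set.range d) M : ℝ) + Nat.count (· ∉ Set.range d) M = M := by
    exact_mod_cast hsplit
  linarith [hC M]

variable {K : Type*} [Field K]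

/-! ### Coefficients and polynomials -/

/-- The coefficient of `z⁻ⁱ` as an additive map on `𝔽_q((z⁻¹))`. -/
def coeff (i : ℤ) : FF K →+ K where
  toFun x := (toL x).coeff i
  map_zero' := rfl
  map_add' _ _ := rfl

lemma coeff_apply (i : ℤ) (x : FF K) : coeff i x = (toL x).coeff i := rfl

@[ext] lemma ext_coeff {x y : FF K} (h : ∀ i, coeff i x = coeff i y) : x = y :=
  HahnSeries.ext (funext h)

lemma toL_ne_zero {x : FF K} (hx : x ≠ 0) : toL x ≠ 0 := hx

lemma toL_mul (x y : FF K) : toL (x * y) = toL x * toL y := rfl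

/-- The embedding `polyF` of `𝔽_q[z]` into `𝔽_q((z⁻¹))` as a ring homomorphism, giving access to the
generic `map_*` lemmas. -/
def polyFHom : K[X] →+* FF K :=
  (Polynomial.aeval (R := K) (HahnSeries.single (-1 : ℤ) (1 : K))).toRingHom

lemma polyF_zero : polyF (0 : K[X]) = 0 := map_zero polyFHom
lemma polyF_one : polyF (1 : K[X]) = 1 := map_one polyFHom
lemma polyF_add (P Q : K[X]) : polyF (P + Q) = polyF P + polyF Q := map_add polyFHom P Q
lemma polyF_sub (P Q : K[X]) : polyF (P - Q) = polyF P - polyF Q := map_sub polyFHom P Q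
lemma polyF_mul (P Q : K[X]) : polyF (P * Q) = polyF P * polyF Q := map_mul polyFHom P Q
lemma polyF_sum {ι : Type*} (s : Finset ι) (f : ι → K[X]) :
    polyF (∑ i ∈ s, f i) = ∑ i ∈ s, polyF (f i) := map_sum polyFHom f s

lemma toL_polyF_monomial (n : ℕ) (a : K) :
    toL (polyF (Polynomial.monomial n a)) = HahnSeries.single (-(n : ℤ)) a := by
  have hC : algebraMap K (LaurentSeries K) a = HahnSeries.single 0 a := by
    rw [HahnSeries.algebraMap_apply', PowerSeries.algebraMap_apply, HahnSeries.ofPowerSeries_C]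
    rfl
  unfold polyF toL
  rw [Polynomial.aeval_monomial, HahnSeries.single_pow, hC, HahnSeries.single_mul_single]
  simp

lemma coeff_polyF (P : K[X]) (j : ℤ) :
    coeff j (polyF P) = if j ≤ 0 then P.coeff (-j).toNat else 0 := by
  induction P using Polynomial.induction_on' with
  | add P Q hP hQ =>
    rw [polyF_add, map_add, hP, hQ, Polynomial.coeff_add]
    split_ifs <;> simp
  | monomial n a =>
    rw [coeff_apply, toL_polyF_monomial, HahnSeries.coeff_single, Polynomial.coeff_monomial]
    split_ifs <;> first | rfl | omega

lemma polyF_injective : Function.Injective (polyF : K[X] → FF K) := by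
  intro P Q h
  ext n
  simpa [coeff_polyF] using congrArg (coeff (-n : ℤ)) h

lemma polyF_ne_zero {P : K[X]} (hP : P ≠ 0) : polyF P ≠ 0 :=
  polyF_zero (K := K) ▸ polyF_injective.ne hP

lemma coeff_polyF_mul (P : K[X]) (x : FF K) (j : ℤ) :
    coeff j (polyF P * x) =
      ∑ i ∈ Finset.range (P.natDegree + 1), P.coeff i * coeff (j + i) x := by
  conv_lhs => rw [P.as_sum_range, polyF_sum, Finset.sum_mul, map_sum]
  refine Finset.sum_congr rfl fun i _ ↦ ?_
  rw [coeff_apply, toL_mul, toL_polyF_monomial, HahnSeries.coeff_single_mul, sub_neg_eq_add,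
    coeff_apply]

lemma coeff_intPoly (x : FF K) (n : ℕ) : (intPoly x).coeff n = coeff (-n) x := by
  simp only [intPoly, Polynomial.finsetSum_coeff, Polynomial.coeff_monomial, Finset.sum_ite_eq',
    Finset.mem_range, ← coeff_apply, ite_eq_left_iff]
  intro hn
  exact (HahnSeries.coeff_eq_zero_of_lt_order (by omega)).symm

lemma coeff_fracPart (x : FF K) (i : ℤ) :
    coeff i (fracPart x) = if 1 ≤ i then coeff i x else 0 := rfl

lemma polyF_intPoly_add_fracPart (x : FF K) : polyF (intPoly x) + fracPart x = x := by
  ext i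
  rw [map_add, coeff_polyF, coeff_fracPart]
  rcases le_or_gt i 0 with hi | hi
  · rw [if_pos hi, if_neg (by omega), add_zero, coeff_intPoly, Int.toNat_of_nonneg (by omega),
      neg_neg]
  · rw [if_neg (by omega), if_pos (by omega), zero_add]

/-! ### Irrationality and the Gauss map -/

lemma FIrrational.ne_zero {x : FF K} (hx : FIrrational x) : x ≠ 0 := by
  rintro rfl
  exact hx 0 1 one_ne_zero (by rw [zero_mul, polyF_zero])

lemma polyF_intPoly_inv_add_gaussMap (x : FF K) : polyF (intPoly x⁻¹) + gaussMap x = x⁻¹ :=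
  polyF_intPoly_add_fracPart x⁻¹

lemma FIrrational.gaussMap {x : FF K} (hx : FIrrational x) : FIrrational (gaussMap x) := by
  intro P Q hQ h
  have hx0 := hx.ne_zero
  have hPQ : x * polyF (P + intPoly x⁻¹ * Q) = polyF Q := by
    rw [polyF_add, polyF_mul, ← h, ← add_mul, add_comm (FPSDA.gaussMap x),
      polyF_intPoly_inv_add_gaussMap, mul_inv_cancel_left₀ hx0]
  refine hx _ _ (fun h0 ↦ polyF_ne_zero hQ ?_) hPQ
  rw [← hPQ, h0, polyF_zero, mul_zero]

lemma FIrrational.iterate_gaussMap {x : FF K} (hx : FIrrational x) (k : ℕ) :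
    FIrrational (FPSDA.gaussMap^[k] x) := by
  induction k with
  | zero => exact hx
  | succ k ih =>
    rw [Function.iterate_succ_apply']
    exact ih.gaussMap

lemma polyF_pquot_add_iterate_gaussMap (α : FF K) (k : ℕ) :
    polyF (pquot α k) + gaussMap^[k + 1] α = (gaussMap^[k] α)⁻¹ := by
  rw [Function.iterate_succ_apply']
  exact polyF_intPoly_inv_add_gaussMap _

/-! ### Convergents -/

/-- The numerator `P_k` of the `k`-th convergent of the continued fraction expansion of `α ∈ 𝕀`,
satisfying the recursion of `cfQ` with the initial values `P_0 = 0` and `P_1 = 1`. -/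
def cfP (α : FF K) : ℕ → K[X]
  | 0 => 0
  | 1 => 1
  | (k + 2) => pquot α (k + 1) * cfP α (k + 1) + cfP α k

theorem polyF_cfQ_mul_sub_polyF_cfP {α : FF K} (hirr : FIrrational α) (k : ℕ) :
    polyF (cfQ α k) * α - polyF (cfP α k) =
      (-1) ^ k * ∏ i ∈ Finset.range (k + 1), gaussMap^[i] α := by
  induction k using Nat.twoStepInduction with
  | zero => simp [cfQ, cfP, polyF_zero, polyF_one]
  | one =>
    have hα := hirr.ne_zero
    have hA : polyF (pquot α 0) = α⁻¹ - gaussMap α :=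
      eq_sub_of_add_eq (polyF_pquot_add_iterate_gaussMap α 0)
    simp only [cfQ, cfP, polyF_one, hA, Finset.prod_range_succ, Finset.range_zero,
      Finset.prod_empty, Function.iterate_zero, Function.iterate_one, id]
    field_simp
    ring
  | more k ih₀ ih₁ =>
    have hT := (hirr.iterate_gaussMap (k + 1)).ne_zero
    have hA := eq_sub_of_add_eq (polyF_pquot_add_iterate_gaussMap α (k + 1))
    have hrec : polyF (cfQ α (k + 2)) * α - polyF (cfP α (k + 2)) =
        polyF (pquot α (k + 1)) * (polyF (cfQ α (k + 1)) * α - polyF (cfP α (k + 1))) +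
          (polyF (cfQ α k) * α - polyF (cfP α k)) := by
      simp only [cfQ, cfP, polyF_add, polyF_mul]
      ring
    rw [hrec, ih₀, ih₁, hA, Finset.prod_range_succ _ (k + 2), Finset.prod_range_succ _ (k + 1)]
    field_simp
    ring

/-! ### The norm -/

variable [Fintype K]

variable (K) in
lemma one_lt_q : (1 : ℝ) < Fintype.card K := by
  exact_mod_cast Fintype.one_lt_card

variable (K) in
lemma q_pos : (0 : ℝ) < Fintype.card K := zero_lt_one.trans (one_lt_q K)

lemma fnorm_of_ne_zero {x : FF K} (hx : x ≠ 0) :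
    fnorm x = (Fintype.card K : ℝ) ^ (-(toL x).order) := if_neg (toL_ne_zero hx)

lemma fnorm_zero : fnorm (0 : FF K) = 0 := fnorm_eq_zero.mpr rfl

lemma fnorm_le_zpow_neg_iff {x : FF K} {n : ℤ} :
    fnorm x ≤ (Fintype.card K : ℝ) ^ (-n) ↔ ∀ i < n, coeff i x = 0 := by
  rcases eq_or_ne x 0 with rfl | hx
  · simpa [fnorm_zero] using (zpow_pos (q_pos K) n).le
  · rw [fnorm_of_ne_zero hx, zpow_le_zpow_iff_right₀ (one_lt_q K), neg_le_neg_iff,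
      HahnSeries.le_order_iff_forall (toL_ne_zero hx)]
    rfl

lemma fnorm_lt_one_iff {x : FF K} : fnorm x < 1 ↔ ∀ i ≤ 0, coeff i x = 0 := by
  rcases eq_or_ne x 0 with rfl | hx
  · simp [fnorm_zero]
  · rw [fnorm_of_ne_zero hx, zpow_lt_one_iff_right₀ (one_lt_q K), Left.neg_neg_iff,
      ← Int.add_one_le_iff, HahnSeries.le_order_iff_forall (toL_ne_zero hx)]
    simp only [Int.lt_add_one_iff]
    rfl

lemma zpow_neg_le_fnorm {x : FF K} {i : ℤ} (h : coeff i x ≠ 0) :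
    (Fintype.card K : ℝ) ^ (-i) ≤ fnorm x := by
  have hx : x ≠ 0 := by
    rintro rfl
    exact h (map_zero _)
  rw [fnorm_of_ne_zero hx]
  exact zpow_le_zpow_right₀ one_le_q (neg_le_neg (HahnSeries.order_le_of_coeff_ne_zero h))

lemma fnorm_mul (x y : FF K) : fnorm (x * y) = fnorm x * fnorm y := by
  rcases eq_or_ne x 0 with rfl | hx
  · simp [fnorm_zero]
  rcases eq_or_ne y 0 with rfl | hy
  · simp [fnorm_zero]
  rw [fnorm_of_ne_zero (mul_ne_zero hx hy), fnorm_of_ne_zero hx, fnorm_of_ne_zero hy, toL_mul,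
    HahnSeries.order_mul (toL_ne_zero hx) (toL_ne_zero hy), neg_add, zpow_add₀ (q_pos K).ne']

lemma fnorm_one : fnorm (1 : FF K) = 1 := by
  have h := fnorm_mul (1 : FF K) 1
  rw [mul_one] at h
  exact (left_eq_mul₀ (fnorm_eq_zero.not.mpr one_ne_zero)).mp h

/-- The norm as a homomorphism of monoids with zero, giving access to the generic `map_*` lemmas. -/
def fnormHom : FF K →*₀ ℝ where
  toFun := fnorm
  map_zero' := fnorm_zero
  map_one' := fnorm_one
  map_mul' := fnorm_mul

lemma fnorm_inv (x : FF K) : fnorm x⁻¹ = (fnorm x)⁻¹ := map_inv₀ fnormHom x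

lemma fnorm_prod {ι : Type*} (s : Finset ι) (f : ι → FF K) :
    fnorm (∏ i ∈ s, f i) = ∏ i ∈ s, fnorm (f i) := map_prod fnormHom f s

lemma fnorm_neg_one_pow (k : ℕ) : fnorm ((-1 : FF K) ^ k) = 1 := by
  have h : fnorm ((-1 : FF K) ^ k) = fnorm (-1 : FF K) ^ k := map_pow fnormHom _ k
  rw [h, fnorm_neg, fnorm_one, one_pow]

lemma fnorm_sub_le (x y : FF K) : fnorm (x - y) ≤ max (fnorm x) (fnorm y) := by
  simpa only [sub_eq_add_neg, fnorm_neg] using fnorm_add_le x (-y)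

lemma fnorm_add_eq_left {x y : FF K} (h : fnorm y < fnorm x) : fnorm (x + y) = fnorm x := by
  refine le_antisymm ((fnorm_add_le x y).trans_eq (max_eq_left h.le)) (le_of_not_gt fun hlt ↦ ?_)
  have hx := fnorm_sub_le (x + y) y
  rw [add_sub_cancel_right] at hx
  exact (max_lt hlt h).not_ge hx

lemma dist_eq_fnorm (x y : FF K) : dist x y = fnorm (x - y) := rfl

lemma fnorm_polyF {P : K[X]} (hP : P ≠ 0) :
    fnorm (polyF P) = (Fintype.card K : ℝ) ^ P.natDegree := by
  rw [← zpow_natCast, ← neg_neg (P.natDegree : ℤ)]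
  refine le_antisymm (fnorm_le_zpow_neg_iff.mpr fun i hi ↦ ?_) (zpow_neg_le_fnorm ?_)
  · rw [coeff_polyF, if_pos (by omega), Polynomial.coeff_eq_zero_of_natDegree_lt (by omega)]
  · rw [coeff_polyF, if_pos (by omega), neg_neg, Int.toNat_natCast]
    exact Polynomial.leadingCoeff_ne_zero.mpr hP

lemma natDegree_pos_of_one_lt_fnorm_polyF {P : K[X]} (h : 1 < fnorm (polyF P)) :
    0 < P.natDegree := by
  have hP : P ≠ 0 := by
    rintro rfl
    rw [polyF_zero, fnorm_zero] at h
    exact h.not_gt one_pos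
  rw [fnorm_polyF hP] at h
  exact Nat.pos_of_ne_zero fun h0 ↦ by simp [h0] at h

lemma fnorm_fracPart_lt_one (x : FF K) : fnorm (fracPart x) < 1 :=
  fnorm_lt_one_iff.mpr fun i hi ↦ by rw [coeff_fracPart, if_neg (by omega)]

/-! ### Degrees of the convergents -/

lemma one_lt_fnorm_inv {x : FF K} (hx : x ≠ 0) (hx1 : fnorm x < 1) : 1 < fnorm x⁻¹ := by
  rw [fnorm_inv]
  exact (one_lt_inv₀ ((fnorm_nonneg x).lt_of_ne' (fnorm_eq_zero.not.mpr hx))).mpr hx1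

lemma fnorm_polyF_intPoly {x : FF K} (hx : 1 < fnorm x) : fnorm (polyF (intPoly x)) = fnorm x := by
  have h : polyF (intPoly x) = x + -fracPart x := by
    rw [← sub_eq_add_neg, eq_sub_iff_add_eq, polyF_intPoly_add_fracPart]
  rw [h, fnorm_add_eq_left]
  rw [fnorm_neg]
  exact (fnorm_fracPart_lt_one x).trans hx

lemma fnorm_iterate_gaussMap_lt_one {α : FF K} (hα : fnorm α < 1) (k : ℕ) :
    fnorm (gaussMap^[k] α) < 1 := by
  cases k with
  | zero => exact hα
  | succ k =>
    rw [Function.iterate_succ_apply']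
    exact fnorm_fracPart_lt_one _

section Convergents

variable {α : FF K} (hα : fnorm α < 1) (hirr : FIrrational α)
include hα hirr

lemma fnorm_polyF_pquot (k : ℕ) : fnorm (polyF (pquot α k)) = (fnorm (gaussMap^[k] α))⁻¹ := by
  rw [← fnorm_inv]
  exact fnorm_polyF_intPoly
    (one_lt_fnorm_inv (hirr.iterate_gaussMap k).ne_zero (fnorm_iterate_gaussMap_lt_one hα k))

lemma natDegree_pquot_pos (k : ℕ) : 0 < (pquot α k).natDegree := by
  refine natDegree_pos_of_one_lt_fnorm_polyF ?_
  rw [fnorm_polyF_pquot hα hirr, ← fnorm_inv]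
  exact one_lt_fnorm_inv (hirr.iterate_gaussMap k).ne_zero (fnorm_iterate_gaussMap_lt_one hα k)

lemma pquot_ne_zero (k : ℕ) : pquot α k ≠ 0 :=
  Polynomial.ne_zero_of_natDegree_gt (natDegree_pquot_pos hα hirr k)

lemma fnorm_iterate_gaussMap (k : ℕ) :
    fnorm (gaussMap^[k] α) = ((Fintype.card K : ℝ) ^ (pquot α k).natDegree)⁻¹ := by
  rw [← fnorm_polyF (pquot_ne_zero hα hirr k), fnorm_polyF_pquot hα hirr, inv_inv]

lemma natDegree_cfQ (k : ℕ) :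
    (cfQ α k).natDegree = ∑ i ∈ Finset.range k, (pquot α i).natDegree := by
  induction k using Nat.twoStepInduction with
  | zero => exact Polynomial.natDegree_one
  | one => rw [Finset.sum_range_one, cfQ]
  | more k ih₀ ih₁ =>
    have hpos := natDegree_pquot_pos hα hirr
    have hQ : cfQ α (k + 1) ≠ 0 := Polynomial.ne_zero_of_natDegree_gt (n := 0) <| by
      rw [ih₁]
      exact Finset.sum_pos (fun i _ ↦ hpos i) Finset.nonempty_range_add_one
    have hmul : (pquot α (k + 1) * cfQ α (k + 1)).natDegree =
        ∑ i ∈ Finset.range (k + 2), (pquot α i).natDegree := by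
      rw [Polynomial.natDegree_mul (pquot_ne_zero hα hirr _) hQ, ih₁, add_comm,
        ← Finset.sum_range_succ]
    rw [cfQ, Polynomial.natDegree_add_eq_left_of_natDegree_lt, hmul]
    rw [hmul, ih₀, Finset.sum_range_succ, Finset.sum_range_succ]
    have := hpos k
    omega

lemma strictMono_natDegree_cfQ : StrictMono fun k ↦ (cfQ α k).natDegree := by
  refine strictMono_nat_of_lt_succ fun k ↦ ?_
  simp only [natDegree_cfQ hα hirr, Finset.sum_range_succ]
  exact Nat.lt_add_of_pos_right (natDegree_pquot_pos hα hirr k)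

lemma cfQ_ne_zero (k : ℕ) : cfQ α k ≠ 0 := by
  cases k with
  | zero => exact one_ne_zero
  | succ k =>
    exact Polynomial.ne_zero_of_natDegree_gt (strictMono_natDegree_cfQ hα hirr k.lt_succ_self)

theorem fnorm_polyF_cfQ_mul_sub_polyF_cfP (k : ℕ) :
    fnorm (polyF (cfQ α k) * α - polyF (cfP α k)) =
      ((Fintype.card K : ℝ) ^ (cfQ α (k + 1)).natDegree)⁻¹ := by
  rw [polyF_cfQ_mul_sub_polyF_cfP hirr, fnorm_mul, fnorm_neg_one_pow, one_mul, fnorm_prod,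
    natDegree_cfQ hα hirr, ← Finset.prod_pow_eq_pow_sum, ← Finset.prod_inv_distrib]
  exact Finset.prod_congr rfl fun i _ ↦ fnorm_iterate_gaussMap hα hirr i

end Convergents

/-! ### Badly approximable targets -/

lemma sdist_nonneg (x : FF K) : 0 ≤ sdist x := Real.iInf_nonneg fun _ ↦ fnorm_nonneg _

theorem zpow_neg_one_le_fnorm_mul_sdist {α θ : FF K} {P Q x : K[X]}
    (hx : fnorm ((polyF Q * α - polyF P) * polyF x) ≤ (Fintype.card K : ℝ) ^ (-2 : ℤ))
    (hθ : coeff 1 (polyF Q * θ) ≠ 0) :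
    (Fintype.card K : ℝ) ^ (-1 : ℤ) ≤ fnorm (polyF Q) * sdist (α * polyF x - θ) := by
  rw [sdist, Real.mul_iInf_of_nonneg (fnorm_nonneg _)]
  refine le_ciInf fun y ↦ ?_
  rw [← fnorm_mul]
  refine zpow_neg_le_fnorm fun hw ↦ hθ ?_
  have hsplit : polyF Q * θ = (polyF Q * α - polyF P) * polyF x + polyF (P * x - Q * y) -
      polyF Q * (α * polyF x - θ - polyF y) := by
    rw [polyF_sub, polyF_mul, polyF_mul]
    ring
  rw [hsplit, map_sub, map_add, fnorm_le_zpow_neg_iff.mp hx 1 one_lt_two, coeff_polyF,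
    if_neg (by decide), hw, add_zero, sub_zero]

variable (K) in
/-- The open unit ball `𝕀`, whose elements are the power series in `z⁻¹` without constant term. -/
def unitBall : Set (FF K) := {x | fnorm x < 1}

/-- The `θ ∈ 𝕀` for which `Q_k θ` has a nonzero coefficient at `z⁻¹` for every denominator `Q_k` of
a convergent of `α`. -/
def cfQNonvanishing (α : FF K) : Set (FF K) :=
  {θ ∈ unitBall K | ∀ k, coeff 1 (polyF (cfQ α k) * θ) ≠ 0}

lemma zpow_neg_two_le_fnorm_mul_sdist {α θ : FF K} (hα : fnorm α < 1) (hirr : FIrrational α)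
    (hθ : θ ∈ cfQNonvanishing α) {x : K[X]} (hx : x ≠ 0) :
    (Fintype.card K : ℝ) ^ (-2 : ℤ) ≤ fnorm (polyF x) * sdist (α * polyF x - θ) := by
  have hq := q_pos K
  have hmono := strictMono_natDegree_cfQ hα hirr
  obtain ⟨k, hlt, hle⟩ : ∃ k, (cfQ α k).natDegree < x.natDegree + 2 ∧
      x.natDegree + 2 ≤ (cfQ α (k + 1)).natDegree :=
    hmono.exists_between_of_tendsto_atTop hmono.tendsto_atTop (by simp [cfQ])
  have hsmall : fnorm ((polyF (cfQ α k) * α - polyF (cfP α k)) * polyF x) ≤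
      (Fintype.card K : ℝ) ^ (-2 : ℤ) := by
    rw [fnorm_mul, fnorm_polyF_cfQ_mul_sub_polyF_cfP hα hirr, fnorm_polyF hx, ← zpow_natCast,
      ← zpow_natCast, ← zpow_neg, ← zpow_add₀ hq.ne']
    exact zpow_le_zpow_right₀ one_le_q (by omega)
  have hQ : fnorm (polyF (cfQ α k)) ≤ Fintype.card K * fnorm (polyF x) := by
    rw [fnorm_polyF (cfQ_ne_zero hα hirr k), fnorm_polyF hx, ← pow_succ']
    exact pow_le_pow_right₀ one_le_q (by omega)
  calc (Fintype.card K : ℝ) ^ (-2 : ℤ)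
      = (Fintype.card K : ℝ)⁻¹ * (Fintype.card K : ℝ) ^ (-1 : ℤ) := by
        rw [← zpow_neg_one, ← zpow_add₀ hq.ne']; rfl
    _ ≤ (Fintype.card K : ℝ)⁻¹ * (fnorm (polyF (cfQ α k)) * sdist (α * polyF x - θ)) := by
        gcongr
        exact zpow_neg_one_le_fnorm_mul_sdist hsmall (hθ.2 k)
    _ ≤ (Fintype.card K : ℝ)⁻¹ *
          (Fintype.card K * fnorm (polyF x) * sdist (α * polyF x - θ)) := by
        gcongr
        exact sdist_nonneg _
    _ = fnorm (polyF x) * sdist (α * polyF x - θ) := by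
        rw [mul_assoc, inv_mul_cancel_left₀ hq.ne']

theorem cfQNonvanishing_subset_sBad {α : FF K} (hα : fnorm α < 1) (hirr : FIrrational α) {ε : ℝ}
    (hε : ε ≤ (Fintype.card K : ℝ) ^ (-2 : ℤ)) : cfQNonvanishing α ⊆ sBad α ε := by
  refine fun θ hθ ↦ ⟨hθ.1, le_liminf_of_le (by isBoundedDefault) ?_⟩
  filter_upwards [preimage_mem_comap (Ioi_mem_atTop (0 : ℝ))] with x hx
  refine ENNReal.ofReal_le_ofReal (hε.trans (zpow_neg_two_le_fnorm_mul_sdist hα hirr hθ ?_))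
  rintro rfl
  simp [polyF_zero, fnorm_zero] at hx

/-! ### Prescribing coefficients -/

lemma exists_coeff_eq (u : ℕ → K) : ∃ θ ∈ unitBall K, ∀ n : ℕ, coeff (n + 1) θ = u n := by
  let f : LaurentSeries K := (PowerSeries.mk u : LaurentSeries K)
  have hcoeff (i : ℤ) : (HahnSeries.single (1 : ℤ) (1 : K) * f).coeff i = f.coeff (i - 1) := by
    rw [HahnSeries.coeff_single_mul, one_mul]
  refine ⟨HahnSeries.single (1 : ℤ) (1 : K) * f, fnorm_lt_one_iff.mpr fun i hi ↦ ?_, fun n ↦ ?_⟩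
  · refine (hcoeff i).trans ?_
    rw [PowerSeries.coeff_coe, if_pos (by omega)]
  · refine (hcoeff _).trans ?_
    rw [add_sub_cancel_right, LaurentSeries.coeff_coe_powerSeries, PowerSeries.coeff_mk]

theorem exists_mem_cfQNonvanishing {α : FF K} (hα : fnorm α < 1) (hirr : FIrrational α)
    (c : ℕ → K) : ∃ θ ∈ cfQNonvanishing α,
      ∀ n ∉ Set.range fun k ↦ (cfQ α k).natDegree, coeff (n + 1) θ = c n := by
  obtain ⟨u, hu, huc⟩ := exists_sum_coeff_mul_ne_zero (cfQ_ne_zero hα hirr)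
    (strictMono_natDegree_cfQ hα hirr).injective c
  obtain ⟨θ, hθ, hθu⟩ := exists_coeff_eq u
  refine ⟨θ, ⟨hθ, fun k ↦ ?_⟩, fun n hn ↦ (hθu n).trans (huc n hn)⟩
  simpa only [coeff_polyF_mul, add_comm (1 : ℤ), hθu] using hu k

/-! ### Hausdorff dimension in `𝕀` -/

/-- The cylinder of the `θ ∈ 𝕀` whose first `n` coefficients, those of `z⁻¹, …, z⁻ⁿ`, are `c`. For
each `n` these cylinders form the cover of `𝕀` that bounds its dimension from above. -/
def coeffCylinder {n : ℕ} (c : Fin n → K) : Set (FF K) :=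
  {θ ∈ unitBall K | ∀ i : Fin n, coeff ((i : ℕ) + 1) θ = c i}

lemma coeff_eq_of_mem_unitBall {x y : FF K} {n : ℕ} (hx : x ∈ unitBall K) (hy : y ∈ unitBall K)
    (h : ∀ i < n, coeff ((i : ℕ) + 1) x = coeff (i + 1) y) {i : ℤ} (hi : i < n + 1) :
    coeff i x = coeff i y := by
  rcases le_or_gt i 0 with h0 | h0
  · rw [fnorm_lt_one_iff.mp hx i h0, fnorm_lt_one_iff.mp hy i h0]
  · lift i to ℕ using h0.le
    have hi' := h (i - 1) (by omega)
    rwa [← Nat.cast_add_one, Nat.sub_add_cancel (by omega)] at hi'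

lemma ediam_coeffCylinder_le {n : ℕ} (c : Fin n → K) :
    Metric.ediam (coeffCylinder c) ≤ (Fintype.card K : ℝ≥0∞)⁻¹ ^ n := by
  refine Metric.ediam_le fun x hx y hy ↦ ?_
  have hdist : dist x y ≤ (Fintype.card K : ℝ)⁻¹ ^ n := by
    rw [dist_eq_fnorm, inv_pow, ← zpow_natCast, ← zpow_neg, fnorm_le_zpow_neg_iff]
    intro i hi
    rw [map_sub, sub_eq_zero]
    exact coeff_eq_of_mem_unitBall hx.1 hy.1
      (fun j hj ↦ (hx.2 ⟨j, hj⟩).trans (hy.2 ⟨j, hj⟩).symm) (hi.trans (lt_add_one _))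
  refine (edist_dist x y).trans_le ((ENNReal.ofReal_le_ofReal hdist).trans_eq ?_)
  rw [ENNReal.ofReal_pow (inv_nonneg.mpr (q_pos K).le), ENNReal.ofReal_inv_of_pos (q_pos K),
    ENNReal.ofReal_natCast]

lemma hausdorffMeasure_unitBall_le : Measure.hausdorffMeasure 1 (unitBall K) ≤ 1 := by
  have hr : Tendsto (fun n : ℕ ↦ (Fintype.card K : ℝ≥0∞)⁻¹ ^ n) atTop (nhds 0) := by
    refine ENNReal.tendsto_pow_atTop_nhds_zero_of_lt_one (ENNReal.inv_lt_one.mpr ?_)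
    exact_mod_cast Fintype.one_lt_card
  have hcover (n : ℕ) : unitBall K ⊆ ⋃ c : Fin n → K, coeffCylinder c :=
    fun θ hθ ↦ Set.mem_iUnion.mpr ⟨_, hθ, fun _ ↦ rfl⟩
  have hsum (n : ℕ) : ∑ c : Fin n → K, Metric.ediam (coeffCylinder c) ^ (1 : ℝ) ≤ 1 :=
    calc ∑ c : Fin n → K, Metric.ediam (coeffCylinder c) ^ (1 : ℝ)
        ≤ ∑ _c : Fin n → K, (Fintype.card K : ℝ≥0∞)⁻¹ ^ n :=
          Finset.sum_le_sum fun c _ ↦ (ENNReal.rpow_one _).trans_le (ediam_coeffCylinder_le c)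
      _ = 1 := by
          rw [Finset.sum_const, Finset.card_univ, Fintype.card_fun, Fintype.card_fin, nsmul_eq_mul,
            Nat.cast_pow, ← mul_pow, ENNReal.mul_inv_cancel (by simp) (ENNReal.natCast_ne_top _),
            one_pow]
  calc Measure.hausdorffMeasure 1 (unitBall K)
      ≤ liminf (fun n ↦ ∑ c : Fin n → K, Metric.ediam (coeffCylinder c) ^ (1 : ℝ)) atTop :=
        Measure.hausdorffMeasure_le_liminf_sum 1 _ _ hr _
          (.of_forall fun _ ↦ ediam_coeffCylinder_le) (.of_forall hcover)
    _ ≤ liminf (fun _ : ℕ ↦ (1 : ℝ≥0∞)) atTop := liminf_le_liminf (.of_forall hsum)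
    _ = 1 := liminf_const 1

theorem dimH_unitBall_le : dimH (unitBall K) ≤ 1 := by
  refine dimH_le_of_hausdorffMeasure_ne_top (d := 1) ?_
  rw [NNReal.coe_one]
  exact (hausdorffMeasure_unitBall_le.trans_lt ENNReal.one_lt_top).ne

lemma exists_dist_eq_of_ne {x y : FF K} (hx : x ∈ unitBall K) (hy : y ∈ unitBall K) (hne : x ≠ y) :
    ∃ M : ℕ, dist x y = ((Fintype.card K : ℝ) ^ (M + 1))⁻¹ ∧
      ∀ n < M, coeff (n + 1) x = coeff (n + 1) y := by
  have hxy : x - y ≠ 0 := sub_ne_zero.mpr hne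
  have horder : 1 ≤ (toL (x - y)).order := by
    rw [HahnSeries.le_order_iff_forall (toL_ne_zero hxy)]
    intro i hi
    rw [← coeff_apply, map_sub, fnorm_lt_one_iff.mp hx i (by omega),
      fnorm_lt_one_iff.mp hy i (by omega), sub_zero]
  obtain ⟨M, hM⟩ := Int.le.dest horder
  refine ⟨M, ?_, fun n hn ↦ ?_⟩
  · rw [dist_eq_fnorm, fnorm_of_ne_zero hxy, ← hM, zpow_neg, add_comm, ← Nat.cast_add_one,
      zpow_natCast]
  · rw [← sub_eq_zero, ← map_sub, coeff_apply]
    exact HahnSeries.coeff_eq_zero_of_lt_order (by omega)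

/-- The real number whose base `q` digits are the coefficients of `θ` at the `z⁻⁽ⁿ⁺¹⁾` with
`p n`, listed in increasing order of `n`; the digits are an arbitrary enumeration of `𝔽_q`. -/
def digitReal (p : ℕ → Prop) (θ : FF K) : ℝ :=
  Real.ofDigits fun i ↦ Fintype.equivFin K (coeff (Nat.nth p i + 1) θ)

lemma abs_digitReal_sub_le {p : ℕ → Prop} [DecidablePred p] {x y : FF K} {M : ℕ}
    (h : ∀ n < M, coeff (n + 1) x = coeff (n + 1) y) :
    |digitReal p x - digitReal p y| ≤ ((Fintype.card K : ℝ) ^ Nat.count p M)⁻¹ :=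
  Real.abs_ofDigits_sub_ofDigits_le fun i hi ↦ by rw [h _ (Nat.nth_lt_of_lt_count hi)]

lemma Icc_subset_digitReal_image {S : Set (FF K)} {p : ℕ → Prop} (hp : {n | p n}.Infinite)
    (hS : ∀ c : ℕ → K, ∃ θ ∈ S, ∀ n, p n → coeff (n + 1) θ = c n) :
    Set.Icc 0 1 ⊆ digitReal p '' S := by
  intro y hy
  obtain ⟨a, -, rfl⟩ := Real.ofDigits_SurjOn (b := Fintype.card K) Fintype.one_lt_card hy
  obtain ⟨θ, hθ, hθa⟩ := hS fun n ↦ (Fintype.equivFin K).symm (a (Nat.count p n))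
  refine ⟨θ, hθ, congrArg Real.ofDigits (funext fun i ↦ ?_)⟩
  rw [hθa _ (Nat.nth_mem_of_infinite hp i), Nat.count_nth_of_infinite hp, Equiv.apply_symm_apply]

theorem holderOnWith_digitReal {p : ℕ → Prop} [DecidablePred p] {r : ℝ≥0} {C : ℝ}
    (hp : ∀ M : ℕ, r * M ≤ Nat.count p M + C) :
    HolderOnWith ((Fintype.card K : ℝ≥0) ^ (C + r)) r (digitReal p) (unitBall K) := by
  intro x hx y hy
  rcases eq_or_ne x y with rfl | hne
  · simp
  obtain ⟨M, hdist, hM⟩ := exists_dist_eq_of_ne hx hy hne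
  have hreal : dist (digitReal p x) (digitReal p y) ≤
      (Fintype.card K : ℝ) ^ (C + r) * dist x y ^ (r : ℝ) :=
    calc dist (digitReal p x) (digitReal p y)
        ≤ ((Fintype.card K : ℝ) ^ Nat.count p M)⁻¹ := abs_digitReal_sub_le hM
      _ = (Fintype.card K : ℝ) ^ (-(Nat.count p M : ℝ)) := by
          rw [Real.rpow_neg (q_pos K).le, Real.rpow_natCast]
      _ ≤ (Fintype.card K : ℝ) ^ (C + r + -(M + 1 : ℕ) * r) := by
          refine Real.rpow_le_rpow_of_exponent_le one_le_q ?_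
          push_cast
          linarith [hp M]
      _ = (Fintype.card K : ℝ) ^ (C + r) * dist x y ^ (r : ℝ) := by
          rw [hdist, ← Real.rpow_natCast, ← Real.rpow_neg (q_pos K).le,
            ← Real.rpow_mul (q_pos K).le, ← Real.rpow_add (q_pos K)]
  rw [edist_dist, edist_dist, ENNReal.ofReal_rpow_of_nonneg dist_nonneg r.coe_nonneg,
    ← ENNReal.ofReal_coe_nnreal, ← ENNReal.ofReal_mul (NNReal.coe_nonneg _), NNReal.coe_rpow,
    NNReal.coe_natCast]
  exact ENNReal.ofReal_le_ofReal hreal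

theorem le_dimH_of_exists_coeff_eq {S : Set (FF K)} (hSI : S ⊆ unitBall K) {p : ℕ → Prop}
    [DecidablePred p] (hS : ∀ c : ℕ → K, ∃ θ ∈ S, ∀ n, p n → coeff (n + 1) θ = c n) {r : ℝ≥0}
    {C : ℝ} (hp : ∀ M : ℕ, r * M ≤ Nat.count p M + C) : (r : ℝ≥0∞) ≤ dimH S := by
  rcases eq_zero_or_pos r with rfl | hr
  · exact zero_le
  have hinf := infinite_of_le_count (NNReal.coe_pos.mpr hr) hp
  have hIcc : dimH (Set.Icc (0 : ℝ) 1) = 1 := by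
    rw [Real.dimH_of_nonempty_interior (by simp), Module.finrank_self, Nat.cast_one]
  have hdim : 1 ≤ dimH S / r :=
    calc 1 = dimH (Set.Icc (0 : ℝ) 1) := hIcc.symm
      _ ≤ dimH (digitReal p '' S) := dimH_mono (Icc_subset_digitReal_image hinf hS)
      _ ≤ dimH S / r := ((holderOnWith_digitReal hp).mono hSI).dimH_image_le hr
  simpa using ENNReal.mul_le_of_le_div hdim

end FPSDA

theorem dimH_sBad_of_pquot_degrees_general {K : Type*} [Field K] [Fintype K] {α : FF K}
    (hα : fnorm α < 1) (hirr : FIrrational α)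
    (hdeg : Tendsto (fun n : ℕ ↦ (∑ k ∈ Finset.range n, ((pquot α k).natDegree : ℝ)) / n)
      atTop atTop) {ε : ℝ} (hε : ε ≤ (Fintype.card K : ℝ) ^ (-2 : ℤ)) :
    dimH (sBad α ε) = 1 := by
  refine le_antisymm ((dimH_mono fun θ hθ ↦ hθ.1).trans dimH_unitBall_le) ?_
  suffices 1 ≤ dimH (cfQNonvanishing α) from
    this.trans (dimH_mono (cfQNonvanishing_subset_sBad hα hirr hε))
  refine ENNReal.le_of_forall_nnreal_lt fun r hr ↦ ?_
  have hQ : Tendsto (fun n ↦ ((cfQ α n).natDegree : ℝ) / n) atTop atTop :=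
    hdeg.congr fun n ↦ by rw [natDegree_cfQ hα hirr, Nat.cast_sum]
  obtain ⟨C, hC⟩ := exists_le_count_notMem_range hQ (r := r) (by exact_mod_cast hr)
  exact le_dimH_of_exists_coeff_eq (fun θ hθ ↦ hθ.1) (exists_mem_cfQNonvanishing hα hirr) hC

/-- If `α ∈ 𝕀` is irrational and the degrees of its partial quotients tend to infinity,
then `Bad^ε(α)` has Hausdorff dimension `1` for every `0 < ε ≤ q^{-2}`. -/
theorem dimH_sBad_of_pquot_degrees {K : Type*} [Field K] [Fintype K]
    (α : FF K) (hα : fnorm α < 1) (hirr : FIrrational α)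
    (hdeg : Filter.Tendsto (fun k : ℕ => (pquot α k).natDegree) Filter.atTop Filter.atTop) :
    ∀ ε : ℝ, 0 < ε → ε ≤ (Fintype.card K : ℝ) ^ (-2 : ℤ) → dimH (sBad α ε) = 1 := by
  intro ε _ hε
  exact dimH_sBad_of_pquot_degrees_general hα hirr
    (tendsto_cesaro_atTop (tendsto_natCast_atTop_atTop.comp hdeg)) hε
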